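/- arXiv:2503.24186 — 4 statements merged into one kernel-verified Lean document; each statement's English description precedes it below -/
import Mathlib

section
/- Let R be a commutative Noetherian ring and M a finitely generated R-module. Then ca_R(M) = R if and only if M has finite projective dimension over R. -/
open CategoryTheory

noncomputable section

universe u

variable (R : Type u) [CommRing R]

/-- The `n`-th Ext group of two `R`-modules, as an `R`-module. -/
abbrev ExtM (n : ℕ) (M N : ModuleCat.{u} R) : ModuleCat.{u} R :=
  ((Ext R (ModuleCat.{u} R) n).obj (Opposite.op M)).obj N

/-- The `n`-th cohomological annihilator of a module `M`:
elements `r` with `r • Ext^i(M, N) = 0` for all `i ≥ n` and all finitely generated `N`. -/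
def caN (n : ℕ) (M : ModuleCat.{u} R) : Ideal R where
  carrier := {r | ∀ i, n ≤ i → ∀ N : ModuleCat.{u} R, Module.Finite R N →
    ∀ x : ExtM R i M N, r • x = 0}
  zero_mem' := by intro i _ N _ x; simp
  add_mem' := by
    intro a b ha hb i hi N hN x
    rw [add_smul, ha i hi N hN x, hb i hi N hN x, add_zero]
  smul_mem' := by
    intro c r hr i hi N hN x
    simp only [smul_eq_mul, mul_smul, hr i hi N hN x, smul_zero]

/-- The cohomological annihilator `ca_R(M) = ⋃ₙ ca_R^n(M)`. -/
def ca (M : ModuleCat.{u} R) : Set R := ⋃ n : ℕ, (caN R n M : Set R)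

/-- The `n`-th co-cohomological annihilator of a module `M`. -/
def cocaN (n : ℕ) (M : ModuleCat.{u} R) : Ideal R where
  carrier := {r | ∀ i, n ≤ i → ∀ N : ModuleCat.{u} R, Module.Finite R N →
    ∀ x : ExtM R i N M, r • x = 0}
  zero_mem' := by intro i _ N _ x; simp
  add_mem' := by
    intro a b ha hb i hi N hN x
    rw [add_smul, ha i hi N hN x, hb i hi N hN x, add_zero]
  smul_mem' := by
    intro c r hr i hi N hN x
    simp only [smul_eq_mul, mul_smul, hr i hi N hN x, smul_zero]

/-- The co-cohomological annihilator `coca_R(M) = ⋃ₙ coca_R^n(M)`. -/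
def coca (M : ModuleCat.{u} R) : Set R := ⋃ n : ℕ, (cocaN R n M : Set R)

/-- `M` has projective dimension at most `n`: `Ext^i(M, -) = 0` for all `i > n`. -/
def projDimLE (n : ℕ) (M : ModuleCat.{u} R) : Prop :=
  ∀ i : ℕ, n < i → ∀ N : ModuleCat.{u} R, Subsingleton (ExtM R i M N)

/-- `M` has injective dimension at most `n`: `Ext^i(-, M) = 0` for all `i > n`. -/
def injDimLE (n : ℕ) (M : ModuleCat.{u} R) : Prop :=
  ∀ i : ℕ, n < i → ∀ N : ModuleCat.{u} R, Subsingleton (ExtM R i N M)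

/-- `K` is an `n`-th syzygy of `M` with respect to resolutions by
finitely generated projective modules. -/
def IsSyz : ℕ → ModuleCat.{u} R → ModuleCat.{u} R → Prop
  | 0, M, K => Nonempty (K ≃ₗ[R] M)
  | n + 1, M, K => ∃ (L P : ModuleCat.{u} R), IsSyz n M L ∧
      Module.Finite R P ∧ Module.Projective R P ∧
      ∃ f : P →ₗ[R] L, Function.Surjective f ∧ Nonempty (K ≃ₗ[R] LinearMap.ker f)

/-- `X` is a direct summand of `Y`. -/
def IsSummand (X Y : ModuleCat.{u} R) : Prop :=
  ∃ (i : X →ₗ[R] Y) (p : Y →ₗ[R] X), p.comp i = LinearMap.id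

/-- `X` is a direct summand of a finite direct sum of copies of `G`. -/
def IsSummandOfCopies (G X : ModuleCat.{u} R) : Prop :=
  ∃ k : ℕ, IsSummand R X (ModuleCat.of R (Fin k → G))

/-- The subcategories `thickⁿ(G)` of `mod R`. -/
def thickN (G : ModuleCat.{u} R) : ℕ → Set (ModuleCat.{u} R)
  | 0 => {X | Subsingleton X}
  | n + 1 => {X | ∃ (Y Y₁ Y₂ : ModuleCat.{u} R) (f : Y₁ →ₗ[R] Y) (g : Y →ₗ[R] Y₂),
      Function.Injective f ∧ Function.Surjective g ∧ LinearMap.ker g = LinearMap.range f ∧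
      ((Y₁ ∈ thickN G n ∧ IsSummandOfCopies R G Y₂) ∨
        (IsSummandOfCopies R G Y₁ ∧ Y₂ ∈ thickN G n)) ∧
      IsSummand R X Y}

/-- The balls `|G|ₙ` of Dao–Takahashi. -/
def ballN (G : ModuleCat.{u} R) : ℕ → Set (ModuleCat.{u} R)
  | 0 => {X | Subsingleton X}
  | n + 1 => {Y | ∃ (Y' Y₁ Y₂ : ModuleCat.{u} R)
      (f : Y₁ →ₗ[R] (ModuleCat.of R (Y × Y'))) (g : (ModuleCat.of R (Y × Y')) →ₗ[R] Y₂),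
      Function.Injective f ∧ Function.Surjective g ∧ LinearMap.ker g = LinearMap.range f ∧
      Y₁ ∈ ballN G n ∧ IsSummandOfCopies R G Y₂}

/-- A regular local ring: a Noetherian local ring whose maximal ideal can be
generated by `dim R` elements. -/
def IsRegularLocal (A : Type u) [CommRing A] [IsLocalRing A] : Prop :=
  IsNoetherianRing A ∧ ∃ s : Finset A, Ideal.span (↑s : Set A) = IsLocalRing.maximalIdeal A ∧
    (s.card : WithBot ℕ∞) = ringKrullDim A

/-- The localization of a module at a prime, as a module category object over the local ring. -/
abbrev locMod (p : PrimeSpectrum R) (M : ModuleCat.{u} R) :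
    ModuleCat.{u} (Localization.AtPrime p.asIdeal) :=
  ModuleCat.of (Localization.AtPrime p.asIdeal) (LocalizedModule p.asIdeal.primeCompl M)

/-- Depth of a module over a local ring, via vanishing of `Ext` from the residue field. -/
def depthE (A : Type u) [CommRing A] [IsLocalRing A] (N : ModuleCat.{u} A) : ℕ∞ :=
  sInf ((fun n : ℕ => (n : ℕ∞)) ''
    {n : ℕ | ¬ Subsingleton (ExtM A n (ModuleCat.of A (IsLocalRing.ResidueField A)) N)})

/-- The large restricted flat dimension of `M`. -/
def rfdE (M : ModuleCat.{u} R) : ℕ∞ :=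
  ⨆ p : PrimeSpectrum R,
    (depthE (Localization.AtPrime p.asIdeal)
        (ModuleCat.of (Localization.AtPrime p.asIdeal) (Localization.AtPrime p.asIdeal)) -
      depthE (Localization.AtPrime p.asIdeal) (locMod R p M))

/-- `r • f` factors through a finitely generated projective module. -/
def FactorsThroughProj (M : ModuleCat.{u} R) (f : M →ₗ[R] M) : Prop :=
  ∃ P : ModuleCat.{u} R, Module.Projective R P ∧ Module.Finite R P ∧
    ∃ (g : M →ₗ[R] P) (h : P →ₗ[R] M), h.comp g = f

/-- The annihilator of the stable endomorphism ring of `M`. -/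
def annStableEnd (M : ModuleCat.{u} R) : Set R :=
  {r | ∀ f : M →ₗ[R] M, FactorsThroughProj R M (r • f)}

/-- A resolving subcategory of `mod R`. -/
def IsResolving (C : Set (ModuleCat.{u} R)) : Prop :=
  (∀ P : ModuleCat.{u} R, Module.Finite R P → Module.Projective R P → P ∈ C) ∧
  (∀ X Y : ModuleCat.{u} R, Y ∈ C → IsSummand R X Y → X ∈ C) ∧
  (∀ (Y Y₁ Y₂ : ModuleCat.{u} R) (f : Y₁ →ₗ[R] Y) (g : Y →ₗ[R] Y₂),
    Function.Injective f → Function.Surjective g → LinearMap.ker g = LinearMap.range f →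
    Y₁ ∈ C → Y₂ ∈ C → Y ∈ C) ∧
  (∀ X ∈ C, ∀ K : ModuleCat.{u} R, IsSyz R 1 X K → K ∈ C)

/-- The smallest resolving subcategory containing `G`. -/
def resCl (G : ModuleCat.{u} R) : Set (ModuleCat.{u} R) :=
  ⋂₀ {C | IsResolving R C ∧ G ∈ C}

end

/-!
Let `P` be a projective resolution of `M` by finitely generated modules and let `C` be the cokernel
of `P_{n+1} ⟶ P_n`. Every `n`-cocycle `P_n ⟶ N` factors through the cocycle `P_n ⟶ C`, so an
element of `R` that kills the class of the latter in `Ext^n(M, C)` kills `Ext^n(M, N)` for every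
`N`, finitely generated or not. As `C` is finitely generated, cohomological annihilators can be
computed with arbitrary modules `N`, and `1` annihilates `Ext^i(M, -)` for large `i` exactly when
`M` has finite projective dimension.
-/

section ExtAnnihilator

open Limits Opposite

theorem mem_annihilator_homology_iff {R : Type*} [Ring R] (S : ShortComplex (ModuleCat R)) {r : R} :
    r ∈ Module.annihilator R S.homology ↔
      ∀ z : S.X₂, S.g z = 0 → ∃ y : S.X₁, S.f y = r • z := by
  have smul_mk_eq_zero_iff (z : S.X₂) (hz : S.g z = 0) :
      r • (LinearMap.range S.moduleCatToCycles).mkQ ⟨z, hz⟩ = 0 ↔ ∃ y : S.X₁, S.f y = r • z := by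
    rw [← map_smul, Submodule.mkQ_apply, Submodule.Quotient.mk_eq_zero]
    exact exists_congr fun y => Subtype.ext_iff
  rw [S.moduleCatHomologyIso.toLinearEquiv.annihilator_eq, Module.mem_annihilator]
  refine (Submodule.mkQ_surjective _).forall.trans (Subtype.forall.trans ?_)
  exact forall₂_congr smul_mk_eq_zero_iff

variable {R : Type*} [Ring R] {C : Type*} [Category* C] [Abelian C] [Linear R C]
  [EnoughProjectives C] {X : C}

-- In degree `n = 0` the truncated `n - 1` is `0`, and `P.complex.d 0 0 = 0`.
theorem mem_annihilator_ext_iff (P : ProjectiveResolution X) {n : ℕ} {Y : C} {r : R} :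
    r ∈ Module.annihilator R (((Ext R C n).obj (op X)).obj Y) ↔
      ∀ f : P.complex.X n ⟶ Y, P.complex.d (n + 1) n ≫ f = 0 →
        ∃ g : P.complex.X (n - 1) ⟶ Y, P.complex.d n (n - 1) ≫ g = r • f := by
  have prev_eq : (ComplexShape.up ℕ).prev n = n - 1 := by cases n <;> simp
  let e := P.isoExt (R := R) n Y ≪≫
    (P.complex.linearYonedaObj R Y).homologyIsoSc' (n - 1) n (n + 1) prev_eq (by simp)
  rw [e.toLinearEquiv.annihilator_eq]
  exact mem_annihilator_homology_iff _

theorem annihilator_ext_cokernel_le (P : ProjectiveResolution X) (n : ℕ) (Y : C) :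
    Module.annihilator R (((Ext R C n).obj (op X)).obj (cokernel (P.complex.d (n + 1) n))) ≤
      Module.annihilator R (((Ext R C n).obj (op X)).obj Y) := by
  intro r hr
  refine (mem_annihilator_ext_iff P).2 fun f hf => ?_
  obtain ⟨g, hg⟩ := (mem_annihilator_ext_iff P).1 hr (cokernel.π _) (cokernel.condition _)
  refine ⟨g ≫ cokernel.desc _ f hf, ?_⟩
  rw [← Category.assoc, hg, Linear.smul_comp, cokernel.π_desc]

end ExtAnnihilator

section FiniteResolution

universe u v

theorem finite_cokernel {R : Type u} [Ring R] {M N : ModuleCat.{v} R} [Module.Finite R N]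
    (f : M ⟶ N) : Module.Finite R (Limits.cokernel f : ModuleCat.{v} R) :=
  Module.Finite.of_surjective (Limits.cokernel.π f).hom
    ((ModuleCat.epi_iff_surjective _).1 inferInstance)

variable {R : Type u} [Ring R]

theorem exists_epi_projective_forget₂_obj (X : FGModuleCat.{u} R) :
    ∃ (P : FGModuleCat.{u} R) (f : P ⟶ X), Epi f ∧
      Projective ((forget₂ (FGModuleCat.{u} R) (ModuleCat.{u} R)).obj P) := by
  obtain ⟨n, f, hf⟩ := Module.Finite.exists_fin' R X
  refine ⟨FGModuleCat.of R (Fin n → R), FGModuleCat.ofHom f, ?_, ?_⟩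
  · refine (forget₂ (FGModuleCat.{u} R) (ModuleCat.{u} R)).epi_of_epi_map ?_
    exact (ModuleCat.epi_iff_surjective _).2 hf
  · exact ModuleCat.projective_of_categoryTheory_projective (ModuleCat.of R (Fin n → R))

instance : (forget₂ (FGModuleCat.{u} R) (ModuleCat.{u} R)).PreservesProjectiveObjects where
  projective_obj {P} _ := by
    obtain ⟨Q, f, _, _⟩ := exists_epi_projective_forget₂_obj P
    have retract : Retract P Q := ⟨Projective.factorThru (𝟙 P) f, f, by simp⟩
    exact (retract.map (forget₂ (FGModuleCat.{u} R) (ModuleCat.{u} R))).projective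

instance [IsNoetherianRing R] : EnoughProjectives (FGModuleCat.{u} R) where
  presentation X := by
    obtain ⟨P, f, _, hP⟩ := exists_epi_projective_forget₂_obj X
    have : Projective P :=
      (forget₂ (FGModuleCat.{u} R) (ModuleCat.{u} R)).projective_of_map_projective hP
    exact ⟨{ p := P, f := f }⟩

theorem exists_projectiveResolution_finite {R : Type u} [CommRing R] [IsNoetherianRing R]
    (M : ModuleCat.{u} R) [Module.Finite R M] :
    ∃ P : ProjectiveResolution M, ∀ n, Module.Finite R (P.complex.X n) :=
  let Q := ProjectiveResolution.of (FGModuleCat.of R M)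
  ⟨(forget₂ (FGModuleCat.{u} R) (ModuleCat.{u} R)).mapProjectiveResolution Q,
    fun n => inferInstanceAs (Module.Finite R (Q.complex.X n))⟩

end FiniteResolution

section CohomologicalAnnihilator

universe u

variable {R : Type u} [CommRing R] {M : ModuleCat.{u} R}

theorem caN_le_annihilator_ext (P : ProjectiveResolution M) {n i : ℕ} (hi : n ≤ i)
    [Module.Finite R (P.complex.X i)] (N : ModuleCat.{u} R) :
    caN R n M ≤ Module.annihilator R (ExtM R i M N) := fun _ hr =>
  annihilator_ext_cokernel_le P i N (Module.mem_annihilator.2 (hr i hi _ (finite_cokernel _)))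

theorem projDimLE_of_caN_eq_top (P : ProjectiveResolution M)
    [∀ n, Module.Finite R (P.complex.X n)] {n : ℕ} (h : caN R n M = ⊤) :
    projDimLE R n M := fun _ hi N =>
  Module.annihilator_eq_top_iff.1 (top_le_iff.1 (h ▸ caN_le_annihilator_ext P hi.le N))

theorem caN_succ_eq_top_of_projDimLE {n : ℕ} (h : projDimLE R n M) : caN R (n + 1) M = ⊤ :=
  eq_top_iff.2 fun _ _ i hi N _ _ => (h i hi N).elim _ _

theorem ca_eq_univ_iff_exists_caN_eq_top : ca R M = Set.univ ↔ ∃ n, caN R n M = ⊤ := by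
  refine ⟨fun h => ?_, fun ⟨n, hn⟩ => ?_⟩
  · obtain ⟨n, hn⟩ := Set.mem_iUnion.1 (h.ge (Set.mem_univ 1))
    exact ⟨n, (Ideal.eq_top_iff_one _).2 hn⟩
  · exact Set.eq_univ_of_forall fun r => Set.mem_iUnion.2 ⟨n, hn ▸ Submodule.mem_top⟩

theorem stmt0_general (P : ProjectiveResolution M) [∀ n, Module.Finite R (P.complex.X n)] :
    ca R M = Set.univ ↔ ∃ n : ℕ, projDimLE R n M := by
  rw [ca_eq_univ_iff_exists_caN_eq_top]
  exact ⟨fun ⟨n, hn⟩ => ⟨n, projDimLE_of_caN_eq_top P hn⟩,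
    fun ⟨n, hn⟩ => ⟨n + 1, caN_succ_eq_top_of_projDimLE hn⟩⟩

end CohomologicalAnnihilator

/-- `ca_R(M) = R` iff `M` has finite projective dimension. -/
theorem stmt0 (R : Type u) [CommRing R] [IsNoetherianRing R]
    (M : ModuleCat.{u} R) [Module.Finite R M] :
    ca R M = Set.univ ↔ ∃ n : ℕ, projDimLE R n M := by
  obtain ⟨P, _⟩ := exists_projectiveResolution_finite M
  exact stmt0_general P
end

section
/- Let R be a commutative Noetherian ring, M a finitely generated R-module, and n ≥ 1. Then ca_R^n(M) = ann_R Ext_R^n(M, Ω^n_R(M)), where Ω^n_R(M) denotes an n-th syzygy of M. -/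
open CategoryTheory

/-!
Splicing the short exact sequences that define the syzygies of `M` gives a class `e` in
`Ext^n(M, Ω^n M)`. By dimension shifting along the projective middle terms, every class in
`Ext^i(M, N)` with `i ≥ n` is a Yoneda product `e · y`. Hence `r • e = 0` already forces
`r • (e · y) = (r • e) · y = 0`.

The Yoneda product lives on `Abelian.Ext`, defined in the derived category, whereas `ExtM` is a
derived functor of `Hom`; both are computed by `Hom(P, N)` for a projective resolution `P`.
-/

open Abelian Function Limits

section ExtComparison

variable {R C : Type*} [Ring R] [Category* C] [Abelian C] [Linear R C] [HasExt C]
  {X Y : C} (P : ProjectiveResolution X) {n : ℕ}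

lemma smul_extMk (r : R) (f : P.complex.X n ⟶ Y) (m : ℕ) (hm : n + 1 = m)
    (hf : P.complex.d m n ≫ f = 0) :
    r • P.extMk f m hm hf = P.extMk (r • f) m hm (by rw [Linear.comp_smul, hf, smul_zero]) := by
  rw [Ext.smul_eq_comp_mk₀, P.extMk_comp_mk₀]
  simp only [Linear.comp_smul, Category.comp_id]

lemma extMk_degree_zero_eq_zero_iff (f : P.complex.X 0 ⟶ Y) (m : ℕ) (hm : 0 + 1 = m)
    (hf : P.complex.d m 0 ≫ f = 0) :
    P.extMk f m hm hf = 0 ↔ f = 0 := by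
  refine ⟨fun h ↦ ?_, fun h ↦ by subst h; exact P.extMk_zero m hm⟩
  have isZero_X_one : IsZero (P.cochainComplex.X 1) :=
    P.cochainComplex.isZero_of_isStrictlyLE 0 1
  rw [← P.extEquivCohomologyClass.apply_eq_iff_eq, P.extEquivCohomologyClass_extMk,
    P.extEquivCohomologyClass_zero, CochainComplex.HomComplex.CohomologyClass.mk_eq_zero_iff,
    CochainComplex.HomComplex.Cocycle.toSingleMk_mem_coboundaries_iff _ _ _ _ _ 1 (by simp)] at h
  obtain ⟨g, hg⟩ := h
  rw [isZero_X_one.eq_of_src g 0, comp_zero] at hg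
  exact (cancel_epi _).1 (hg.symm.trans comp_zero.symm)

lemma extMk_eq_zero_iff_exists_prev (f : P.complex.X n ⟶ Y) (m : ℕ) (hm : n + 1 = m)
    (hf : P.complex.d m n ≫ f = 0) :
    P.extMk f m hm hf = 0 ↔
      ∃ g : P.complex.X ((ComplexShape.up ℕ).prev n) ⟶ Y, P.complex.d n _ ≫ g = f := by
  cases n with
  | zero =>
    rw [extMk_degree_zero_eq_zero_iff, P.complex.shape _ _ (by simp)]
    simp [eq_comm]
  | succ p => exact P.extMk_eq_zero_iff f m hm hf _ (by simp)

variable (R Y n) in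
/-- The `R`-linear map taking an `n`-cocycle of `Hom(P, Y)` to its class in `Ext^n(X, Y)`. Using
`ComplexShape.next n` rather than `n + 1` makes the domain definitionally the cycles in the
`n`-th homology of `linearYonedaObj`. -/
noncomputable def cocyclesToExt :
    LinearMap.ker ((P.complex.linearYonedaObj R Y).sc n).g.hom →ₗ[R] Abelian.Ext X Y n where
  toFun f := P.extMk f.1 ((ComplexShape.up ℕ).next n) (by simp) f.2
  map_add' f g := (P.add_extMk ..).symm
  map_smul' r f := (smul_extMk P ..).symm

lemma cocyclesToExt_surjective : Surjective (cocyclesToExt R Y P n) := fun x ↦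
  let ⟨f, hf, hx⟩ := P.extMk_surjective x ((ComplexShape.up ℕ).next n) (by simp)
  ⟨⟨f, hf⟩, hx⟩

lemma ker_cocyclesToExt :
    LinearMap.ker (cocyclesToExt R Y P n) =
      LinearMap.range ((P.complex.linearYonedaObj R Y).sc n).moduleCatToCycles := by
  ext f
  exact (extMk_eq_zero_iff_exists_prev P f.1 _ (by simp) f.2).trans
    ⟨fun ⟨g, hg⟩ ↦ ⟨g, Subtype.ext hg⟩, fun ⟨g, hg⟩ ↦ ⟨g, congrArg Subtype.val hg⟩⟩

/-- The comparison between `Ext` as a derived functor of `Hom` and `Ext` as morphisms in the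
derived category, through the chosen projective resolution of `X`. -/
noncomputable def extLinearEquiv [EnoughProjectives C] (X Y : C) (n : ℕ) :
    ((_root_.Ext R C n).obj (Opposite.op X)).obj Y ≃ₗ[R] Abelian.Ext X Y n :=
  let P := projectiveResolution X
  (P.isoExt n Y ≪≫ ShortComplex.moduleCatHomologyIso _).toLinearEquiv ≪≫ₗ
    Submodule.quotEquivOfEq _ _ (ker_cocyclesToExt P).symm ≪≫ₗ
    (cocyclesToExt R Y P n).quotKerEquivOfSurjective (cocyclesToExt_surjective P)

end ExtComparison

section PrecompSurjective

variable {C : Type*} [Category* C] [Abelian C] [HasExt C] {X Y Z : C} {a b c : ℕ}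

/-- A class `e ∈ Ext^a(X, Y)` is precomposition-surjective if every class in `Ext^i(X, N)` with
`i ≥ a` is a Yoneda product of `e` with some class in `Ext^(i - a)(Y, N)`. The degree is encoded
as `a + m = i` to avoid truncated subtraction. -/
def PrecompSurjective (e : Abelian.Ext X Y a) : Prop :=
  ∀ (N : C) {m i : ℕ} (h : a + m = i), Surjective (e.precomp N h)

namespace PrecompSurjective

lemma mk₀_of_isIso (f : X ⟶ Y) [IsIso f] : PrecompSurjective (Ext.mk₀ f) := by
  intro N m i h x
  obtain rfl : m = i := by lia
  exact ⟨(Ext.mk₀ (inv f)).comp x (zero_add m), by simp⟩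

lemma extClass_of_projective {S : ShortComplex C} (hS : S.ShortExact) [Projective S.X₂] :
    PrecompSurjective hS.extClass := by
  intro N m i h x
  obtain rfl : m + 1 = i := by lia
  exact Ext.contravariant_sequence_exact₃ hS N x (Ext.eq_zero_of_projective _) h

lemma comp {e : Abelian.Ext X Y a} {e' : Abelian.Ext Y Z b} (he : PrecompSurjective e)
    (he' : PrecompSurjective e') (hc : a + b = c) : PrecompSurjective (e.comp e' hc) := by
  intro N m i h x
  obtain ⟨y, rfl⟩ := he N (show a + (b + m) = i by lia) x
  obtain ⟨z, rfl⟩ := he' N rfl y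
  exact ⟨z, Ext.comp_assoc e e' z hc rfl (by lia)⟩

lemma annihilator_le {R : Type*} [Ring R] [Linear R C] {e : Abelian.Ext X Y a}
    (he : PrecompSurjective e) (N : C) (hac : a ≤ c) :
    Module.annihilator R (Abelian.Ext X Y a) ≤ Module.annihilator R (Abelian.Ext X N c) := by
  intro r hr
  refine Module.mem_annihilator.2 fun x ↦ ?_
  have hdeg : a + (c - a) = c := Nat.add_sub_cancel' hac
  obtain ⟨y, rfl⟩ := he N hdeg x
  calc r • e.comp y hdeg = (r • e).comp y hdeg := (Ext.smul_comp ..).symm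
    _ = 0 := by rw [Module.mem_annihilator.1 hr e, Ext.zero_comp]

end PrecompSurjective

end PrecompSurjective

section Syzygy

variable {R : Type u} [CommRing R] {M N K : ModuleCat.{u} R} {n : ℕ}

lemma annihilator_extM :
    Module.annihilator R (ExtM R n M N) = Module.annihilator R (Abelian.Ext M N n) :=
  (extLinearEquiv M N n).annihilator_eq

lemma mem_caN_iff {r : R} :
    r ∈ caN R n M ↔ ∀ i, n ≤ i → ∀ N : ModuleCat.{u} R, Module.Finite R N →
      r ∈ Module.annihilator R (ExtM R i M N) := by
  simp only [Module.mem_annihilator]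
  rfl

namespace IsSyz

lemma finite [IsNoetherianRing R] [Module.Finite R M] (hK : IsSyz R n M K) :
    Module.Finite R K := by
  cases n with
  | zero =>
    obtain ⟨φ⟩ := hK
    exact Module.Finite.equiv φ.symm
  | succ n =>
    obtain ⟨_, _, -, _, -, _, -, ⟨φ⟩⟩ := hK
    exact Module.Finite.equiv φ.symm

lemma exists_precompSurjective (hK : IsSyz R n M K) :
    ∃ e : Abelian.Ext M K n, PrecompSurjective e := by
  induction n generalizing K with
  | zero =>
    obtain ⟨φ⟩ := hK
    exact ⟨_, .mk₀_of_isIso φ.toModuleIso.inv⟩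
  | succ n ih =>
    obtain ⟨L, P, hL, -, hP, f, hf, ⟨φ⟩⟩ := hK
    obtain ⟨e, he⟩ := ih hL
    have hS : f.shortComplexKer.ShortExact := LinearMap.shortExact_shortComplexKer hf
    have : Projective f.shortComplexKer.X₂ := (IsProjective.iff_projective P).1 hP
    exact ⟨_, (he.comp (.extClass_of_projective hS) rfl).comp
      (.mk₀_of_isIso φ.toModuleIso.inv) (add_zero _)⟩

end IsSyz

end Syzygy

theorem stmt1_general (R : Type u) [CommRing R] (M : ModuleCat.{u} R) (n : ℕ)
    (K : ModuleCat.{u} R) [Module.Finite R K] (hK : IsSyz R n M K) :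
    caN R n M = Module.annihilator R (ExtM R n M K) := by
  obtain ⟨e, he⟩ := hK.exists_precompSurjective
  refine le_antisymm (fun r hr ↦ mem_caN_iff.1 hr n le_rfl K ‹_›)
    fun r hr ↦ mem_caN_iff.2 fun i hi N _ ↦ ?_
  rw [annihilator_extM] at hr ⊢
  exact he.annihilator_le N hi hr

/-- `ca_R^n(M) = ann_R Ext^n(M, Ωⁿ M)` for `n ≥ 1`. -/
theorem stmt1 (R : Type u) [CommRing R] [IsNoetherianRing R]
    (M : ModuleCat.{u} R) [Module.Finite R M] (n : ℕ) (hn : 1 ≤ n)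
    (K : ModuleCat.{u} R) (hK : IsSyz R n M K) :
    (caN R n M : Set R) = {r : R | ∀ x : ExtM R n M K, r • x = 0} := by
  have : Module.Finite R K := hK.finite
  rw [stmt1_general R M n K hK]
  exact Set.ext fun _ ↦ Module.mem_annihilator
end

section
/- Let R be a commutative Noetherian ring. Then the annihilator of the singularity category of R equals the intersection of the cohomological annihilators of all finitely generated R-modules: ann_R D_sg(R) = ⋂_{M ∈ mod(R)} ca_R(M). -/
open CategoryTheory

attribute [local instance] HasDerivedCategory.standard

noncomputable section

/-- An object of the derived category is perfect if it is isomorphic to a bounded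
complex of finitely generated projective modules. -/
def IsPerfect {R : Type u} [CommRing R] (X : DerivedCategory (ModuleCat.{u} R)) : Prop :=
  ∃ K : CochainComplex (ModuleCat.{u} R) ℤ,
    (∀ i : ℤ, Module.Finite R (K.X i) ∧ Module.Projective R (K.X i)) ∧
    (∃ a b : ℤ, ∀ i : ℤ, (i < a ∨ b < i) → Subsingleton (K.X i)) ∧
    Nonempty (DerivedCategory.Q.obj K ≅ X)

/-!
Let `X` have bounded finitely generated homology, with top degree `c`. A finitely generated free
module `F` surjecting onto the top homology lifts to a map from `F`, placed in degree `c`, to `X`,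
and the cone of this map has homology in degrees below `c`. Iterating, for every `d ≪ 0` there is a
map from `X` to a finitely generated module placed in degree `d` whose cone is perfect.

If `r` lies in every `ca_R(M)`, do this twice: first from `X` to a module `N` in degree `d`, then
from `N` to a module `N'` in a degree far enough below `d` that `r` kills the corresponding `Ext` of
`N`. The second map is a class in this `Ext`, so for every endomorphism `f` of `X` the composition
of `r • f` with both maps is zero, and `r • f` factors through their fibre, which is perfect.

Conversely, if `r • 𝟙 M` factors through a perfect complex `P`, then `r` kills `Ext^i(M, -)` as soon
as there are no nonzero maps from `P` to modules placed in degree `-i`, hence for all `i ≫ 0`.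
-/

lemma comp_map_smul_id {R C D : Type*} [Semiring R] [Category* C] [Category* D] [Preadditive C]
    [Preadditive D] [Linear R C] [Linear R D] (F : C ⥤ D) [F.Linear R] {X : C} {Y : D}
    (f : Y ⟶ F.obj X) (r : R) : f ≫ F.map (r • 𝟙 X) = r • f := by
  simp

section Ext

universe w v u

variable {R : Type*} [Ring R] {C : Type u} [Category.{v} C] [Abelian C] [Linear R C]
variable [HasExt.{w} C] {X Y : C} {n : ℕ}

/-- The map sending a cocycle of `Hom(P, Y)` to its class in `Ext^n(X, Y)`, where `P` is a
projective resolution of `X`: the linear version of `ProjectiveResolution.extMk`. -/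
def extMkLinearMap (P : ProjectiveResolution X) :
    LinearMap.ker (Linear.leftComp R Y (P.complex.d (n + 1) n)) →ₗ[R] Abelian.Ext X Y n where
  toFun f := P.extMk f.1 (n + 1) rfl f.2
  map_add' f g := (P.add_extMk f.1 g.1 (n + 1) rfl f.2 g.2).symm
  map_smul' r f := by
    have hf : P.complex.d (n + 1) n ≫ f.1 = 0 := f.2
    change P.extMk (r • f.1) (n + 1) rfl (by simp [hf]) = r • P.extMk f.1 (n + 1) rfl hf
    simp [Abelian.Ext.smul_eq_comp_mk₀, P.extMk_comp_mk₀]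

lemma extMkLinearMap_surjective (P : ProjectiveResolution X) :
    Function.Surjective (extMkLinearMap (R := R) (Y := Y) (n := n) P) := fun e ↦ by
  obtain ⟨f, hf, rfl⟩ := P.extMk_surjective e (n + 1) rfl
  exact ⟨⟨f, hf⟩, rfl⟩

lemma mem_ker_extMkLinearMap_iff (P : ProjectiveResolution X)
    (f : LinearMap.ker (Linear.leftComp R Y (P.complex.d (n + 2) (n + 1)))) :
    f ∈ LinearMap.ker (extMkLinearMap P) ↔ ∃ g, P.complex.d (n + 1) n ≫ g = f.1 :=
  P.extMk_eq_zero_iff f.1 (n + 2) rfl f.2 n rfl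

variable (R X Y n) in
/-- The comparison between the derived functor `Ext` and `Abelian.Ext`. Only positive degrees are
treated, so that coboundaries come from a previous term of the resolution. -/
def extSuccLinearEquiv [EnoughProjectives C] :
    ((Ext R C (n + 1)).obj (Opposite.op X)).obj Y ≃ₗ[R] Abelian.Ext X Y (n + 1) :=
  let P := projectiveResolution X
  let K := P.complex.linearYonedaObj R Y
  let S := K.sc' n (n + 1) (n + 2)
  let φ : LinearMap.ker S.g.hom →ₗ[R] Abelian.Ext X Y (n + 1) := extMkLinearMap P
  have range_eq_ker : LinearMap.range S.moduleCatToCycles = LinearMap.ker φ :=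
    Submodule.ext fun f ↦
      (exists_congr fun _ ↦ Subtype.ext_iff).trans (mem_ker_extMkLinearMap_iff P f).symm
  (P.isoExt (R := R) (n + 1) Y ≪≫ K.homologyIsoSc' n (n + 1) (n + 2) (by simp) (by simp) ≪≫
      S.moduleCatHomologyIso).toLinearEquiv.trans <|
    (Submodule.quotEquivOfEq _ _ range_eq_ker).trans
      (φ.quotKerEquivOfSurjective (extMkLinearMap_surjective P))

end Ext

lemma exists_single_map_homologyMap_eq {C ι : Type*} [Category* C] [Abelian C]
    {c : ComplexShape ι} [DecidableEq ι] (K : HomologicalComplex C c) (j : ι) (F : C) [Projective F]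
    (p : F ⟶ K.homology j) :
    ∃ φ : (HomologicalComplex.single C c j).obj F ⟶ K,
      (HomologicalComplex.singleObjHomologySelfIso c j F).inv ≫
        HomologicalComplex.homologyMap φ j = p := by
  let z := Projective.factorThru p (K.homologyπ j)
  let φ : (HomologicalComplex.single C c j).obj F ⟶ K :=
    HomologicalComplex.mkHomFromSingle (z ≫ K.iCycles j) (by simp)
  have cyclesMap_φ : (HomologicalComplex.singleObjCyclesSelfIso c j F).inv ≫
      HomologicalComplex.cyclesMap φ j = z := by
    rw [← cancel_mono (K.iCycles j)]
    simp [φ]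
  refine ⟨φ, ?_⟩
  rw [← HomologicalComplex.singleObjCyclesSelfIso_inv_homologyπ, Category.assoc,
    HomologicalComplex.homologyπ_naturality, reassoc_of% cyclesMap_φ, Projective.factorThru_comp]

section DerivedCategory

universe w w' v u

open DerivedCategory Pretriangulated

variable {C : Type u} [Category.{v} C] [Abelian C] [HasDerivedCategory.{w} C]

/-- Morphisms in the derived category from `X` placed in degree `d` to `Y` placed in degree `d'` are
the elements of `Ext^n(X, Y)`, where `n = d - d'`. -/
def homSingleFunctorLinearEquivExt (R : Type*) [Ring R] [Linear R C] [HasExt.{w'} C] (X Y : C)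
    {n : ℕ} (d d' : ℤ) (h : d' + n = d) :
    ((singleFunctor C d).obj X ⟶ (singleFunctor C d').obj Y) ≃ₗ[R] Abelian.Ext X Y n :=
  let shift := shiftFunctor (DerivedCategory C) d
  let eX := ((singleFunctors C).shiftIso d 0 d (by simp)).app X
  let eY := ((singleFunctors C).shiftIso d (d' - d) d' (by simp)).app Y
  let eY' := ((singleFunctors C).shiftIso n (d' - d) 0 (by lia)).app Y
  (LinearEquiv.ofBijective (shift.mapLinearMap R) ⟨shift.map_injective, shift.map_surjective⟩).trans
    ((Linear.homCongr R eX (eY ≪≫ eY'.symm)).trans Abelian.Ext.homLinearEquiv.symm)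

lemma exists_Q_map_eq_of_isKProjective (K L : CochainComplex C ℤ) [K.IsKProjective]
    (φ : Q.obj K ⟶ Q.obj L) : ∃ f : K ⟶ L, Q.map f = φ := by
  obtain ⟨g, hg⟩ := (CochainComplex.IsKProjective.Qh_map_bijective K
    ((HomotopyCategory.quotient _ _).obj L)).surjective
    ((quotientCompQhIso C).hom.app K ≫ φ ≫ (quotientCompQhIso C).inv.app L)
  obtain ⟨f, rfl⟩ := (HomotopyCategory.quotient _ _).map_surjective g
  refine ⟨f, ?_⟩
  rw [← cancel_epi ((quotientCompQhIso C).hom.app K),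
    ← quotientCompQhIso_hom_naturality, hg]
  simp

lemma eq_zero_of_isKProjective_of_isZero_X {K : CochainComplex C ℤ} [K.IsKProjective] {j : ℤ}
    {Y : C} (hK : Limits.IsZero (K.X j)) (φ : Q.obj K ⟶ (singleFunctor C j).obj Y) : φ = 0 := by
  let e := (singleFunctorIsoCompQ C j).app Y
  obtain ⟨f, hf⟩ := exists_Q_map_eq_of_isKProjective K _ (φ ≫ e.hom)
  have hf₀ : f = 0 := HomologicalComplex.to_single_hom_ext (hK.eq_of_src _ _)
  rwa [hf₀, Functor.map_zero, eq_comm, Preadditive.IsIso.comp_right_eq_zero] at hf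

lemma isLE_obj₃_of_epi {T : Triangle (DerivedCategory C)} (hT : T ∈ distTriang _) (c : ℤ)
    (h₁ : T.obj₁.IsLE c) (h₂ : T.obj₂.IsLE c) (hepi : Epi ((homologyFunctor C c).map T.mor₁)) :
    T.obj₃.IsLE (c - 1) := by
  rw [isLE_iff]
  intro i hi
  refine (HomologySequence.exact₃ T hT i (i + 1)).isZero_X₂ ?_
    ((isZero_of_isLE T.obj₁ c (i + 1) (by lia)).eq_of_tgt _ _)
  obtain rfl | hic := eq_or_ne i c
  · exact (HomologySequence.epi_homologyMap_mor₁_iff T hT i).1 hepi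
  · exact (isZero_of_isLE T.obj₂ c i (by lia)).eq_of_src _ _

lemma isGE_obj₃ {T : Triangle (DerivedCategory C)} (hT : T ∈ distTriang _) (a : ℤ)
    (h₁ : T.obj₁.IsGE (a + 1)) (h₂ : T.obj₂.IsGE a) : T.obj₃.IsGE a := by
  rw [isGE_iff]
  intro i hi
  exact (HomologySequence.exact₃ T hT i (i + 1)).isZero_X₂
    ((isZero_of_isGE T.obj₂ a i hi).eq_of_src _ _)
    ((isZero_of_isGE T.obj₁ (a + 1) (i + 1) (by lia)).eq_of_tgt _ _)

lemma exists_singleFunctor_hom_epi_homology (X : DerivedCategory C) (c : ℤ) {F : C}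
    [Projective F] (p : F ⟶ (homologyFunctor C c).obj X) [Epi p] :
    ∃ φ : (singleFunctor C c).obj F ⟶ X, Epi ((homologyFunctor C c).map φ) := by
  let K := Q.objPreimage X
  let e : Q.obj K ≅ X := Q.objObjPreimageIso X
  let eK : (homologyFunctor C c).obj X ≅ K.homology c :=
    (homologyFunctor C c).mapIso e.symm ≪≫ (homologyFunctorFactors C c).app K
  obtain ⟨φ, hφ⟩ := exists_single_map_homologyMap_eq K c F (p ≫ eK.hom)
  have hepi : Epi (HomologicalComplex.homologyMap φ c) := epi_of_epi_fac hφ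
  have hepiQ : Epi ((homologyFunctor C c).map (Q.map φ)) := by
    rw [← epi_comp_iff_of_isIso _ ((homologyFunctorFactors C c).hom.app K),
      homologyFunctorFactors_hom_naturality]
    exact epi_comp' inferInstance hepi
  refine ⟨(singleFunctorIsoCompQ C c).hom.app F ≫ Q.map φ ≫ e.hom, ?_⟩
  simp only [Functor.map_comp]
  exact epi_comp' inferInstance (epi_comp' hepiQ inferInstance)

end DerivedCategory

section Perfect

universe u

open DerivedCategory Pretriangulated

lemma isKProjective_of_moduleProjective {R : Type u} [Ring R]
    (K : CochainComplex (ModuleCat.{u} R) ℤ) (hK : ∀ i, Module.Projective R (K.X i)) (b : ℤ)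
    (hb : ∀ i, b < i → Subsingleton (K.X i)) : K.IsKProjective := by
  have : K.IsStrictlyLE b := (K.isStrictlyLE_iff b).2 fun i hi ↦
    have := hb i hi
    ModuleCat.isZero_of_subsingleton _
  have (i : ℤ) : Projective (K.X i) := (IsProjective.iff_projective (K.X i)).1 (hK i)
  exact CochainComplex.isKProjective_of_projective K b

variable {R : Type u} [CommRing R]

namespace IsPerfect

variable {X Y : DerivedCategory (ModuleCat.{u} R)}

lemma of_iso (e : X ≅ Y) (hX : IsPerfect X) : IsPerfect Y := by
  obtain ⟨K, hK, hbdd, ⟨eK⟩⟩ := hX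
  exact ⟨K, hK, hbdd, ⟨eK ≪≫ e⟩⟩

lemma shift (hX : IsPerfect X) (n : ℤ) : IsPerfect (X⟦n⟧) := by
  obtain ⟨K, hK, ⟨a, b, hab⟩, ⟨e⟩⟩ := hX
  exact ⟨K⟦n⟧, fun i ↦ hK (i + n), ⟨a - n, b - n, fun i hi ↦ hab (i + n) (by lia)⟩,
    ⟨(Q.commShiftIso n).app K ≪≫ (shiftFunctor _ n).mapIso e⟩⟩

lemma obj₃ {T : Triangle (DerivedCategory (ModuleCat.{u} R))} (hT : T ∈ distTriang _)
    (h₁ : IsPerfect T.obj₁) (h₂ : IsPerfect T.obj₂) : IsPerfect T.obj₃ := by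
  obtain ⟨K, hK, ⟨a, b, hab⟩, ⟨e₁⟩⟩ := h₁
  obtain ⟨L, hL, ⟨a', b', hab'⟩, ⟨e₂⟩⟩ := h₂
  have := isKProjective_of_moduleProjective K (fun i ↦ (hK i).2) b fun i hi ↦ hab i (.inr hi)
  obtain ⟨f, hf⟩ := exists_Q_map_eq_of_isKProjective K L (e₁.hom ≫ T.mor₁ ≫ e₂.inv)
  let coneX (i : ℤ) : (CochainComplex.mappingCone f).X i ≃ₗ[R] K.X (i + 1) × L.X i :=
    (HomologicalComplex.homotopyCofiber.XIsoBiprod f i (i + 1) (by simp) ≪≫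
      ModuleCat.biprodIsoProd _ _).toLinearEquiv
  refine ⟨CochainComplex.mappingCone f, fun i ↦ ?_,
    ⟨min (a - 1) a', max b b', fun i hi ↦ ?_⟩, ⟨?_⟩⟩
  · obtain ⟨_, _⟩ := hK (i + 1)
    obtain ⟨_, _⟩ := hL i
    exact ⟨.equiv (coneX i).symm, .of_equiv (coneX i).symm⟩
  · have := hab (i + 1) (by lia)
    have := hab' i (by lia)
    exact (coneX i).toEquiv.subsingleton
  · have comm : Q.map f ≫ e₂.hom = e₁.hom ≫ T.mor₁ := by simp [hf]
    exact Triangle.π₃.mapIso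
      (isoTriangleOfIso₁₂ _ _ (mappingCone_triangle_distinguished f) hT e₁ e₂ comm)

lemma singleFunctor_obj (F : ModuleCat.{u} R) [Module.Finite R F] [Module.Projective R F] (c : ℤ) :
    IsPerfect ((singleFunctor _ c).obj F) := by
  let K := (HomologicalComplex.single _ (ComplexShape.up ℤ) c).obj F
  have subsingleton_X (i : ℤ) (hi : i ≠ c) : Subsingleton (K.X i) :=
    ModuleCat.subsingleton_of_isZero (HomologicalComplex.isZero_single_obj_X _ _ _ _ hi)
  refine ⟨K, fun i ↦ ?_, ⟨c, c, fun i hi ↦ subsingleton_X i (by lia)⟩,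
    ⟨((singleFunctorIsoCompQ _ c).app F).symm⟩⟩
  obtain rfl | hi := eq_or_ne i c
  · let e := (HomologicalComplex.singleObjXSelf (ComplexShape.up ℤ) i F).toLinearEquiv
    exact ⟨.equiv e.symm, .of_equiv e.symm⟩
  · have := subsingleton_X i hi
    exact ⟨inferInstance, inferInstance⟩

lemma exists_forall_hom_singleFunctor_eq_zero (hX : IsPerfect X) :
    ∃ a : ℤ, ∀ j < a, ∀ (N : ModuleCat.{u} R) (φ : X ⟶ (singleFunctor _ j).obj N), φ = 0 := by
  obtain ⟨K, hK, ⟨a, b, hab⟩, ⟨e⟩⟩ := hX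
  have := isKProjective_of_moduleProjective K (fun i ↦ (hK i).2) b fun i hi ↦ hab i (.inr hi)
  refine ⟨a, fun j hj N φ ↦ ?_⟩
  have := hab j (.inl hj)
  rw [← Preadditive.IsIso.comp_left_eq_zero e.hom]
  exact eq_zero_of_isKProjective_of_isZero_X (ModuleCat.isZero_of_subsingleton _) _

end IsPerfect

variable (R) in
/-- The perfect complexes, as a class of objects of the derived category. -/
def perfectComplexes : ObjectProperty (DerivedCategory (ModuleCat.{u} R)) := IsPerfect

namespace perfectComplexes

instance : (perfectComplexes R).IsClosedUnderIsomorphisms where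
  of_iso e h := IsPerfect.of_iso e h

instance : (perfectComplexes R).IsStableUnderShift ℤ where
  isStableUnderShiftBy n := ⟨fun _ h ↦ IsPerfect.shift h n⟩

instance : (perfectComplexes R).IsTriangulatedClosed₃ :=
  .mk' fun _ hT ↦ IsPerfect.obj₃ hT

instance : (perfectComplexes R).IsTriangulatedClosed₂ :=
  .of_isTriangulatedClosed₃

instance : (perfectComplexes R).IsTriangulated where
  exists_zero := ⟨_, (singleFunctor _ 0).map_isZero (ModuleCat.isZero_of_subsingleton _),
    IsPerfect.singleFunctor_obj (ModuleCat.of R PUnit) 0⟩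

end perfectComplexes

/-- `f` factors through a perfect complex, that is, `f` vanishes in the singularity category. -/
def FactorsThroughPerfect {X Y : DerivedCategory (ModuleCat.{u} R)} (f : X ⟶ Y) : Prop :=
  ∃ P : DerivedCategory (ModuleCat.{u} R), IsPerfect P ∧ ∃ (u : X ⟶ P) (v : P ⟶ Y), u ≫ v = f

lemma FactorsThroughPerfect.comp_comp {W X Y Z : DerivedCategory (ModuleCat.{u} R)} {f : X ⟶ Y}
    (hf : FactorsThroughPerfect f) (g : W ⟶ X) (h : Y ⟶ Z) :
    FactorsThroughPerfect (g ≫ f ≫ h) := by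
  obtain ⟨P, hP, u, v, rfl⟩ := hf
  exact ⟨P, hP, g ≫ u, v ≫ h, by simp⟩

lemma FactorsThroughPerfect.smul_id_of_iso {X Y : DerivedCategory (ModuleCat.{u} R)} {r : R}
    (e : X ≅ Y) (hr : FactorsThroughPerfect (r • 𝟙 X)) : FactorsThroughPerfect (r • 𝟙 Y) := by
  simpa using hr.comp_comp e.inv e.hom

lemma factorsThroughPerfect_of_comp_eq_zero {X Y Z : DerivedCategory (ModuleCat.{u} R)}
    {s : Y ⟶ Z} (hs : (perfectComplexes R).trW s) {f : X ⟶ Y} (hf : f ≫ s = 0) :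
    FactorsThroughPerfect f := by
  obtain ⟨P, v, w, hT, hP⟩ := ((perfectComplexes R).trW_iff' s).1 hs
  obtain ⟨u, hu⟩ := Triangle.coyoneda_exact₂ _ hT f hf
  exact ⟨P, hP, u, v, hu.symm⟩

/-- All homology modules of `X` are finitely generated. Together with boundedness, this describes
the objects of the bounded derived category of finitely generated modules. -/
def HasFiniteHomology (X : DerivedCategory (ModuleCat.{u} R)) : Prop :=
  ∀ i, Module.Finite R ((homologyFunctor (ModuleCat.{u} R) i).obj X)

lemma hasFiniteHomology_Q_obj_iff {K : CochainComplex (ModuleCat.{u} R) ℤ} :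
    HasFiniteHomology (Q.obj K) ↔ ∀ i, Module.Finite R (K.homology i) :=
  forall_congr' fun i ↦
    Module.Finite.equiv_iff ((homologyFunctorFactors _ i).app K).toLinearEquiv

namespace HasFiniteHomology

variable {X Y : DerivedCategory (ModuleCat.{u} R)}

lemma of_iso (e : X ≅ Y) (hX : HasFiniteHomology X) : HasFiniteHomology Y := fun i ↦
  have := hX i
  .equiv ((homologyFunctor _ i).mapIso e).toLinearEquiv

lemma singleFunctor_obj_iff {M : ModuleCat.{u} R} {c : ℤ} :
    HasFiniteHomology ((singleFunctor _ c).obj M) ↔ Module.Finite R M := by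
  let e := ((singleFunctorCompHomologyFunctorIso _ c).app M).toLinearEquiv
  refine ⟨fun h ↦ (Module.Finite.equiv_iff e).1 (h c), fun hM i ↦ ?_⟩
  obtain rfl | hi := eq_or_ne i c
  · exact (Module.Finite.equiv_iff e).2 hM
  · have := ModuleCat.subsingleton_of_isZero <| hi.lt_or_gt.elim
      (fun h ↦ isZero_of_isGE ((singleFunctor _ c).obj M) c i h)
      (fun h ↦ isZero_of_isLE ((singleFunctor _ c).obj M) c i h)
    infer_instance

lemma obj₃ [IsNoetherianRing R] {T : Triangle (DerivedCategory (ModuleCat.{u} R))}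
    (hT : T ∈ distTriang _) (h₁ : HasFiniteHomology T.obj₁) (h₂ : HasFiniteHomology T.obj₂) :
    HasFiniteHomology T.obj₃ := fun i ↦ by
  have := h₂ i
  have := h₁ (i + 1)
  have exact := (ShortComplex.moduleCat_exact_iff_range_eq_ker _).1
    (HomologySequence.exact₃ T hT i (i + 1))
  have : IsNoetherian R ((homologyFunctor (ModuleCat.{u} R) i).obj T.obj₃) :=
    isNoetherian_of_range_eq_ker ((homologyFunctor _ i).map T.mor₂).hom
      (HomologySequence.δ T i (i + 1)).hom exact
  infer_instance

lemma exists_singleFunctor_hom_epi_homology (hX : HasFiniteHomology X) (c : ℤ) :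
    ∃ (F : ModuleCat.{u} R) (_ : Module.Finite R F) (_ : Module.Projective R F)
      (φ : (singleFunctor _ c).obj F ⟶ X), Epi ((homologyFunctor _ c).map φ) := by
  have := hX c
  obtain ⟨n, p, hp⟩ := Module.Finite.exists_fin' R ((homologyFunctor (ModuleCat.{u} R) c).obj X)
  have : Epi (ModuleCat.ofHom p) := (ModuleCat.epi_iff_surjective _).2 hp
  have : Projective (ModuleCat.of R (Fin n → R)) :=
    (IsProjective.iff_projective (R := R) (Fin n → R)).1 inferInstance
  exact ⟨.of R (Fin n → R), inferInstanceAs (Module.Finite R (Fin n → R)),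
    inferInstanceAs (Module.Projective R (Fin n → R)),
    _root_.exists_singleFunctor_hom_epi_homology X c (ModuleCat.ofHom p)⟩

variable [IsNoetherianRing R]

lemma exists_trW_sub_one (hX : HasFiniteHomology X) (a c : ℤ) [X.IsGE a] [X.IsLE c] :
    ∃ (Y : DerivedCategory (ModuleCat.{u} R)) (s : X ⟶ Y), (perfectComplexes R).trW s ∧
      HasFiniteHomology Y ∧ Y.IsGE (min a (c - 1)) ∧ Y.IsLE (c - 1) := by
  obtain ⟨F, _, _, φ, hepi⟩ := hX.exists_singleFunctor_hom_epi_homology c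
  obtain ⟨Y, s, δ, hT⟩ := distinguished_cocone_triangle φ
  refine ⟨Y, s, .mk' _ hT (.singleFunctor_obj F c),
    .obj₃ hT (singleFunctor_obj_iff.2 inferInstance) hX, ?_, ?_⟩
  · exact isGE_obj₃ hT _ (TStructure.t.isGE_of_ge ((singleFunctor _ c).obj F) _ c (by lia))
      (TStructure.t.isGE_of_ge X _ a (by lia))
  · exact isLE_obj₃_of_epi hT c (inferInstanceAs (((singleFunctor _ c).obj F).IsLE c))
      ‹X.IsLE c› hepi

lemma exists_trW_isLE (hX : HasFiniteHomology X) (a : ℤ) {c d : ℤ} [X.IsGE a] [X.IsLE c]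
    (hd : d ≤ c) :
    ∃ (Y : DerivedCategory (ModuleCat.{u} R)) (s : X ⟶ Y), (perfectComplexes R).trW s ∧
      HasFiniteHomology Y ∧ Y.IsGE (min a d) ∧ Y.IsLE d := by
  induction d, hd using Int.leInductionDown with
  | base => exact ⟨X, 𝟙 X, MorphismProperty.id_mem _ _, hX,
      TStructure.t.isGE_of_ge X _ a (by lia), inferInstance⟩
  | pred d _ ih =>
    obtain ⟨Y, s, hs, hY, _, _⟩ := ih
    obtain ⟨Z, t, ht, hZ, hge, hle⟩ := hY.exists_trW_sub_one (min a d) d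
    have hmin : min (min a d) (d - 1) = min a (d - 1) := by lia
    exact ⟨Z, s ≫ t, MorphismProperty.comp_mem _ _ _ hs ht, hZ, hmin ▸ hge, hle⟩

lemma exists_trW_singleFunctor (hX : HasFiniteHomology X) {a c d : ℤ} [X.IsGE a] [X.IsLE c]
    (hda : d ≤ a) (hdc : d ≤ c) :
    ∃ (N : ModuleCat.{u} R) (_ : Module.Finite R N) (s : X ⟶ (singleFunctor _ d).obj N),
      (perfectComplexes R).trW s := by
  obtain ⟨Y, s, hs, hY, hge, _⟩ := hX.exists_trW_isLE a hdc
  rw [min_eq_right hda] at hge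
  obtain ⟨N, ⟨e⟩⟩ := exists_iso_singleFunctor_obj_of_isGE_of_isLE Y d
  exact ⟨N, singleFunctor_obj_iff.1 (hY.of_iso e), s ≫ e.hom,
    MorphismProperty.RespectsIso.postcomp _ e.hom _ hs⟩

end HasFiniteHomology

lemma smul_extM_succ_eq_zero_iff {r : R} {M N : ModuleCat.{u} R} {n : ℕ} {d d' : ℤ}
    (h : d' + (n + 1 : ℕ) = d) :
    (∀ x : ExtM R (n + 1) M N, r • x = 0) ↔
      ∀ s : (singleFunctor _ d).obj M ⟶ (singleFunctor _ d').obj N, r • s = 0 := by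
  have e := (extSuccLinearEquiv R M N n).trans (homSingleFunctorLinearEquivExt R M N d d' h).symm
  rw [← Module.mem_annihilator, ← Module.mem_annihilator, e.annihilator_eq]

lemma mem_ca_of_factorsThroughPerfect {r : R} {M : ModuleCat.{u} R}
    (hr : FactorsThroughPerfect (r • 𝟙 ((singleFunctor _ 0).obj M))) : r ∈ ca R M := by
  obtain ⟨P, hP, u, v, huv⟩ := hr
  obtain ⟨a, ha⟩ := hP.exists_forall_hom_singleFunctor_eq_zero
  refine Set.mem_iUnion.2 ⟨(-a).toNat + 1, fun i hi N _ ↦ ?_⟩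
  obtain ⟨n, rfl⟩ : ∃ n, i = n + 1 := ⟨i - 1, by lia⟩
  refine (smul_extM_succ_eq_zero_iff (d := 0) (d' := -(n + 1 : ℕ)) (by lia)).2 fun s ↦ ?_
  calc r • s = (r • 𝟙 _) ≫ s := by simp
    _ = u ≫ v ≫ s := by rw [← huv, Category.assoc]
    _ = 0 := by rw [ha _ (by lia) N (v ≫ s), Limits.comp_zero]

lemma factorsThroughPerfect_smul_of_forall_mem_ca [IsNoetherianRing R] {r : R}
    (hr : ∀ M : ModuleCat.{u} R, Module.Finite R M → r ∈ ca R M)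
    {X Y : DerivedCategory (ModuleCat.{u} R)} (hY : HasFiniteHomology Y) (a c : ℤ)
    [Y.IsGE a] [Y.IsLE c] (f : X ⟶ Y) : FactorsThroughPerfect (r • f) := by
  obtain ⟨N, hN, s, hs⟩ := hY.exists_trW_singleFunctor (min_le_left a c) (min_le_right a c)
  obtain ⟨n, hn⟩ := Set.mem_iUnion.1 (hr N hN)
  obtain ⟨N', hN', t, ht⟩ :=
    (HasFiniteHomology.singleFunctor_obj_iff (c := min a c).2 hN).exists_trW_singleFunctor
      (a := min a c) (c := min a c) (d := min a c - (n + 1 : ℕ)) (by lia) (by lia)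
  have smul_t : r • t = 0 :=
    (smul_extM_succ_eq_zero_iff (by lia)).1 (hn (n + 1) (by lia) N' hN') t
  refine factorsThroughPerfect_of_comp_eq_zero (MorphismProperty.comp_mem _ _ _ hs ht) ?_
  calc (r • f) ≫ s ≫ t = f ≫ s ≫ (r • t) := by simp
    _ = 0 := by simp [smul_t]

end Perfect

/-- the annihilator of the singularity category, i.e. the set of
`r` such that for every object `X` of `D^f(R)` and every endomorphism `f` of
`X`, the morphism `r • f` vanishes in `D_sg(R)` (equivalently, factors through
a perfect complex), coincides with `⋂_{M ∈ mod R} ca_R(M)`. -/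
theorem stmt8 (R : Type u) [CommRing R] [IsNoetherianRing R] :
    {r : R | ∀ K : CochainComplex (ModuleCat.{u} R) ℤ,
        (∀ i : ℤ, Module.Finite R (K.homology i)) →
        (∃ a b : ℤ, ∀ i : ℤ, (i < a ∨ b < i) → Subsingleton (K.homology i)) →
        ∀ f : DerivedCategory.Q.obj K ⟶ DerivedCategory.Q.obj K,
          ∃ P : DerivedCategory (ModuleCat.{u} R), IsPerfect P ∧
            ∃ (u : DerivedCategory.Q.obj K ⟶ P) (v : P ⟶ DerivedCategory.Q.obj K),
              u ≫ v = f ≫ DerivedCategory.Q.map (r • 𝟙 K)} =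
      {r : R | ∀ M : ModuleCat.{u} R, Module.Finite R M → r ∈ ca R M} := by
  ext r
  constructor
  · intro hr M hM
    let K := (HomologicalComplex.single _ (ComplexShape.up ℤ) 0).obj M
    let e : (DerivedCategory.singleFunctor _ 0).obj M ≅ DerivedCategory.Q.obj K :=
      (DerivedCategory.singleFunctorIsoCompQ _ 0).app M
    have hfin := hasFiniteHomology_Q_obj_iff.1
      ((HasFiniteHomology.singleFunctor_obj_iff.2 hM).of_iso e)
    have hfac : FactorsThroughPerfect (r • 𝟙 (DerivedCategory.Q.obj K)) :=
      comp_map_smul_id DerivedCategory.Q (𝟙 (DerivedCategory.Q.obj K)) r ▸ hr K hfin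
        ⟨0, 0, fun i hi ↦ ModuleCat.subsingleton_of_isZero
          (HomologicalComplex.isZero_single_obj_homology _ _ _ _ (by lia))⟩ _
    exact mem_ca_of_factorsThroughPerfect (hfac.smul_id_of_iso e.symm)
  · rintro hr K hfin ⟨a, b, hab⟩ f
    have hzero (i : ℤ) (hi : i < a ∨ b < i) : K.ExactAt i :=
      have := hab i hi
      (K.exactAt_iff_isZero_homology i).2 (ModuleCat.isZero_of_subsingleton _)
    have : K.IsGE a := (K.isGE_iff a).2 fun i hi ↦ hzero i (.inl hi)
    have : K.IsLE b := (K.isLE_iff b).2 fun i hi ↦ hzero i (.inr hi)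
    rw [comp_map_smul_id]
    exact factorsThroughPerfect_smul_of_forall_mem_ca hr (hasFiniteHomology_Q_obj_iff.2 hfin) a b f

end
end

section
/- Let R be a commutative Noetherian ring and M a finitely generated R-module. Then V(ca_R(M)) ⊆ Sing(R), where Sing(R) = {p ∈ Spec(R) : R_p is not regular}. -/
open CategoryTheory

/-!
Suppose that `R_p` is regular. Then every finitely generated `R_p`-module has finite projective
dimension, by induction on the embedding dimension: cut `R_p` by some `x ∈ 𝔪 ∖ 𝔪²`, which is a
nonzerodivisor because a regular local ring is a domain. A first syzygy `K` of a module is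
torsion-free, so a bound on the projective dimension of `K / xK` over `R_p / (x)` is also a bound
for `K` over `R_p`.

Hence some finitely generated syzygy `L` of `M` over `R` has `L_p` projective. Clearing denominators
in a splitting of a free cover of `L_p` yields `s ∉ p` such that `s • id_L` factors through a free
module. This `s` annihilates all higher `Ext` out of `L`, and by dimension shifting all `Ext` out of
`M` in large degrees, so `s ∈ ca_R(M) ∖ p`.
-/

universe u

section RegularLocalRing

open IsLocalRing

lemma IsRegularLocal.isRegularLocalRing {A : Type u} [CommRing A] [IsLocalRing A]
    (hA : IsRegularLocal A) : IsRegularLocalRing A := by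
  obtain ⟨_, s, hspan, hcard⟩ := hA
  refine IsRegularLocalRing.of_spanFinrank_maximalIdeal_le _ ?_
  rw [← hcard, ← hspan, Nat.cast_le, ← Set.ncard_coe_finset]
  exact Submodule.spanFinrank_span_le_ncard_of_finite s.finite_toSet

variable {A : Type*} [CommRing A]

lemma isLocalRing_quotient_span_singleton [IsLocalRing A] {x : A} (hx : x ∈ maximalIdeal A) :
    IsLocalRing (A ⧸ Ideal.span {x}) :=
  have : Nontrivial (A ⧸ Ideal.span {x}) := by
    rwa [Ideal.Quotient.nontrivial_iff, Ne, Ideal.span_singleton_eq_top]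
  .of_surjective' (Ideal.Quotient.mk _) Ideal.Quotient.mk_surjective

lemma exists_mem_span_insert_erase_eq_maximalIdeal [IsLocalRing A] [DecidableEq A] {s : Finset A}
    (hs : Ideal.span (s : Set A) = maximalIdeal A) {x : A} (hx : x ∈ maximalIdeal A)
    (hx2 : x ∉ maximalIdeal A ^ 2) :
    ∃ a ∈ s, Ideal.span (insert x (s.erase a : Set A)) = maximalIdeal A := by
  obtain ⟨c, -, hc⟩ := Submodule.mem_span_finset.1 (hs.symm ▸ hx : x ∈ Ideal.span (s : Set A))
  obtain ⟨a, ha, hunit⟩ : ∃ a ∈ s, IsUnit (c a) := by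
    by_contra! hnonunit
    rw [← hc, pow_two] at hx2
    exact hx2 <| sum_mem fun a ha ↦ Ideal.mul_mem_mul (hnonunit a ha) (hs ▸ Ideal.subset_span ha)
  refine ⟨a, ha, le_antisymm ?_ ?_⟩
  · rw [Ideal.span_le, Set.insert_subset_iff, ← hs]
    exact ⟨hs ▸ hx, fun b hb ↦ Ideal.subset_span (Finset.mem_of_mem_erase hb)⟩
  · have mem_of_mem_erase (b) (hb : b ∈ s.erase a) :
        b ∈ Ideal.span (insert x (s.erase a : Set A)) :=
      Ideal.subset_span (Set.mem_insert_of_mem _ hb)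
    have hca : c a * a = x - ∑ b ∈ s.erase a, c b • b := by
      rw [eq_sub_iff_add_eq, ← hc, ← Finset.add_sum_erase s (fun b ↦ c b • b) ha, smul_eq_mul]
    have ha_mem : a ∈ Ideal.span (insert x (s.erase a : Set A)) := by
      rw [← Ideal.unit_mul_mem_iff_mem _ hunit, hca]
      exact sub_mem (Ideal.subset_span (Set.mem_insert _ _))
        (sum_mem fun b hb ↦ Ideal.mul_mem_left _ _ (mem_of_mem_erase b hb))
    rw [← hs, Ideal.span_le]
    intro b hb
    obtain rfl | hne := eq_or_ne b a
    · exact ha_mem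
    · exact mem_of_mem_erase b (Finset.mem_erase_of_ne_of_mem hne hb)

lemma spanFinrank_maximalIdeal_quotient_add_one_le [IsLocalRing A] [IsNoetherianRing A] {x : A}
    (hx : x ∈ maximalIdeal A) (hx2 : x ∉ maximalIdeal A ^ 2)
    [IsLocalRing (A ⧸ Ideal.span {x})] :
    (maximalIdeal (A ⧸ Ideal.span {x})).spanFinrank + 1 ≤ (maximalIdeal A).spanFinrank := by
  classical
  obtain ⟨s, hcard, hspan⟩ :=
    Submodule.FG.exists_span_finset_card_eq_spanFinrank (maximalIdeal A).fg_of_isNoetherianRing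
  obtain ⟨a, ha, hspan_insert⟩ := exists_mem_span_insert_erase_eq_maximalIdeal hspan hx hx2
  let t := (s.erase a).image (Ideal.Quotient.mk (Ideal.span {x}))
  have hx0 : Ideal.Quotient.mk (Ideal.span {x}) x = 0 :=
    Ideal.Quotient.eq_zero_iff_mem.2 (Ideal.mem_span_singleton_self x)
  have ht : Ideal.span (t : Set (A ⧸ Ideal.span {x})) = maximalIdeal (A ⧸ Ideal.span {x}) := by
    rw [← map_maximalIdeal_of_surjective _ Ideal.Quotient.mk_surjective, ← hspan_insert,
      Ideal.map_span, Set.image_insert_eq, hx0, Ideal.span_insert_zero, Finset.coe_image]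
  calc (maximalIdeal (A ⧸ Ideal.span {x})).spanFinrank + 1
      ≤ t.card + 1 := by
        rw [← ht, ← Set.ncard_coe_finset]
        gcongr
        exact Submodule.spanFinrank_span_le_ncard_of_finite t.finite_toSet
    _ ≤ (s.erase a).card + 1 := by gcongr; exact Finset.card_image_le
    _ = (maximalIdeal A).spanFinrank := by rw [Finset.card_erase_add_one ha, hcard]

lemma ringKrullDim_le_ringKrullDim_quotient_span_singleton_add_one [IsLocalRing A]
    [IsNoetherianRing A] {x : A} (hx : x ∈ maximalIdeal A) :
    ringKrullDim A ≤ ringKrullDim (A ⧸ Ideal.span {x}) + 1 := by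
  simpa using ringKrullDim_le_ringKrullDim_quotient_add_encard {x}
    (by simpa [ringJacobson_eq_maximalIdeal] using hx)

section Regular

variable [IsRegularLocalRing A] {x : A}

lemma isRegularLocalRing_quotient_span_singleton (hx : x ∈ maximalIdeal A)
    (hx2 : x ∉ maximalIdeal A ^ 2) : IsRegularLocalRing (A ⧸ Ideal.span {x}) := by
  have := isLocalRing_quotient_span_singleton hx
  refine .of_spanFinrank_maximalIdeal_le _ (ENat.WithBot.add_le_add_one_right_iff.1 ?_)
  calc ((maximalIdeal (A ⧸ Ideal.span {x})).spanFinrank : WithBot ℕ∞) + 1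
      ≤ (maximalIdeal A).spanFinrank :=
        mod_cast spanFinrank_maximalIdeal_quotient_add_one_le hx hx2
    _ = ringKrullDim A := IsRegularLocalRing.spanFinrank_maximalIdeal
    _ ≤ ringKrullDim (A ⧸ Ideal.span {x}) + 1 :=
        ringKrullDim_le_ringKrullDim_quotient_span_singleton_add_one hx

lemma spanFinrank_maximalIdeal_quotient_add_one [IsRegularLocalRing (A ⧸ Ideal.span {x})]
    (hx : x ∈ maximalIdeal A) (hx2 : x ∉ maximalIdeal A ^ 2) :
    (maximalIdeal (A ⧸ Ideal.span {x})).spanFinrank + 1 = (maximalIdeal A).spanFinrank := by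
  refine (spanFinrank_maximalIdeal_quotient_add_one_le hx hx2).antisymm ?_
  have hdim := ringKrullDim_le_ringKrullDim_quotient_span_singleton_add_one hx
  rw [← IsRegularLocalRing.spanFinrank_maximalIdeal,
    ← IsRegularLocalRing.spanFinrank_maximalIdeal] at hdim
  exact_mod_cast hdim

end Regular

lemma not_maximalIdeal_le_of_mem_minimalPrimes [IsLocalRing A] (hdim : ringKrullDim A ≠ 0)
    {q : Ideal A} (hq : q ∈ minimalPrimes A) : ¬ maximalIdeal A ≤ q := by
  intro hle
  obtain rfl : q = maximalIdeal A := (le_maximalIdeal hq.1.1.ne_top).antisymm hle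
  exact hdim <| by rw [← maximalIdeal_height_eq_ringKrullDim, Ideal.height_eq_zero_iff.2 hq]; rfl

variable [IsLocalRing A] [IsNoetherianRing A]

lemma isField_of_spanFinrank_maximalIdeal_eq_zero (h : (maximalIdeal A).spanFinrank = 0) :
    IsField A := by
  rwa [isField_iff_maximalIdeal_eq,
    ← Submodule.spanFinrank_eq_zero_iff_eq_bot (maximalIdeal A).fg_of_isNoetherianRing]

lemma exists_mem_maximalIdeal_notMem_sq_notMem_minimalPrimes (hdim : ringKrullDim A ≠ 0) :
    ∃ x ∈ maximalIdeal A, x ∉ maximalIdeal A ^ 2 ∧ ∀ q ∈ minimalPrimes A, x ∉ q := by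
  have not_le : ∀ q ∈ insert (maximalIdeal A ^ 2) (minimalPrimes A), ¬ maximalIdeal A ≤ q := by
    rintro q (rfl | hq)
    · exact (maximalIdeal_sq_lt_of_ringKrullDim_ne_zero hdim).not_ge
    · exact not_maximalIdeal_le_of_mem_minimalPrimes hdim hq
  have not_subset := mt (Ideal.subset_union_prime_finite
    ((minimalPrimes.finite_of_isNoetherianRing A).insert (maximalIdeal A ^ 2)) (f := id)
    (maximalIdeal A ^ 2) (maximalIdeal A ^ 2) fun q hq hne _ ↦ (hq.resolve_left hne).1.1).1
    fun ⟨q, hq, hle⟩ ↦ not_le q hq hle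
  simpa [Set.not_subset] using not_subset

lemma isDomain_of_isPrime_span_singleton_of_notMem_minimalPrimes {x : A}
    (hx : x ∈ maximalIdeal A) (hprime : (Ideal.span {x}).IsPrime)
    (hmin : ∀ q ∈ minimalPrimes A, x ∉ q) : IsDomain A := by
  obtain ⟨q, hq, hqx⟩ := Ideal.exists_minimalPrimes_le (bot_le : ⊥ ≤ Ideal.span {x})
  have hq_prime : q.IsPrime := hq.1.1
  have hle : q ≤ Ideal.span {x} • q := by
    intro y hy
    obtain ⟨a, rfl⟩ := Ideal.mem_span_singleton.1 (hqx hy)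
    exact Ideal.mul_mem_mul (Ideal.mem_span_singleton_self x)
      ((hq_prime.mem_or_mem hy).resolve_left (hmin q hq))
  have hjac : Ideal.span {x} ≤ Ideal.jacobson ⊥ :=
    (Ideal.span_singleton_le_iff_mem _).2 (maximalIdeal_le_jacobson _ hx)
  obtain rfl : q = ⊥ :=
    Submodule.eq_bot_of_le_smul_of_le_jacobson_bot _ _ (IsNoetherian.noetherian _) hle hjac
  exact IsDomain.of_bot_isPrime A

lemma exists_isRegularLocalRing_quotient_span_singleton (A : Type*) [CommRing A]
    [IsRegularLocalRing A] (hA : (maximalIdeal A).spanFinrank ≠ 0) :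
    ∃ x ∈ maximalIdeal A, (∀ q ∈ minimalPrimes A, x ∉ q) ∧
      ∃ _ : IsRegularLocalRing (A ⧸ Ideal.span {x}),
        (maximalIdeal (A ⧸ Ideal.span {x})).spanFinrank + 1 = (maximalIdeal A).spanFinrank := by
  have hdim : ringKrullDim A ≠ 0 := by
    rw [← IsRegularLocalRing.spanFinrank_maximalIdeal]
    exact_mod_cast hA
  obtain ⟨x, hx, hx2, hmin⟩ := exists_mem_maximalIdeal_notMem_sq_notMem_minimalPrimes hdim
  have := isRegularLocalRing_quotient_span_singleton hx hx2
  exact ⟨x, hx, hmin, this, spanFinrank_maximalIdeal_quotient_add_one hx hx2⟩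

theorem isDomain_of_isRegularLocalRing (A : Type*) [CommRing A] [IsRegularLocalRing A] :
    IsDomain A := by
  induction hn : (maximalIdeal A).spanFinrank generalizing A with
  | zero => exact (isField_of_spanFinrank_maximalIdeal_eq_zero hn).isDomain
  | succ n ih =>
    obtain ⟨x, hx, hmin, _, hrank⟩ :=
      exists_isRegularLocalRing_quotient_span_singleton A (by simp [hn])
    have : IsDomain (A ⧸ Ideal.span {x}) := ih _ (by omega)
    exact isDomain_of_isPrime_span_singleton_of_notMem_minimalPrimes hx
      ((Ideal.Quotient.isDomain_iff_prime _).1 this) hmin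

end RegularLocalRing

section ProjectiveDimension

open Function IsLocalRing nonZeroDivisors

section

variable {A K F M : Type*} [CommRing A] [AddCommGroup K] [Module A K] [AddCommGroup F] [Module A F]
  [AddCommGroup M] [Module A M] {i : K →ₗ[A] F} {f : F →ₗ[A] M}

lemma injective_quotSMulTop_map_of_isSMulRegular (hi : Injective i) (hif : Exact i f) {x : A}
    (hx : IsSMulRegular M x) : Injective (QuotSMulTop.map x i) := by
  have hexact := QuotSMulTop.map_first_exact_on_four_term_exact_of_isSMulRegular_last
    ((LinearMap.exact_zero_iff_injective K i).2 hi) hif hx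
  rw [map_zero] at hexact
  exact (LinearMap.exact_zero_iff_injective _ _).1 hexact

end

variable {A K F M : Type u} [CommRing A] [AddCommGroup K] [Module A K] [AddCommGroup F] [Module A F]
  [AddCommGroup M] [Module A M] {i : K →ₗ[A] F} {f : F →ₗ[A] M}

lemma hasProjectiveDimensionLE_zero_iff_projective :
    HasProjectiveDimensionLE (ModuleCat.of A M) 0 ↔ Module.Projective A M := by
  rw [← projective_iff_hasProjectiveDimensionLE_zero, ← IsProjective.iff_projective]

lemma hasProjectiveDimensionLE_succ_iff_of_exact [Module.Projective A F] (hi : Injective i)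
    (hif : Exact i f) (hf : Surjective f) (n : ℕ) :
    HasProjectiveDimensionLE (ModuleCat.of A M) (n + 1) ↔
      HasProjectiveDimensionLE (ModuleCat.of A K) n :=
  (ModuleCat.shortComplex_shortExact
    (ModuleCat.shortComplexOfCompEqZero i f hif.linearMap_comp_eq_zero) hif hi
      hf).hasProjectiveDimensionLT_X₃_iff n ((IsProjective.iff_projective F).1 inferInstance)

lemma hasProjectiveDimensionLE_succ_iff_ker [Module.Projective A F] (hf : Surjective f) (n : ℕ) :
    HasProjectiveDimensionLE (ModuleCat.of A M) (n + 1) ↔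
      HasProjectiveDimensionLE (ModuleCat.of A (LinearMap.ker f)) n :=
  hasProjectiveDimensionLE_succ_iff_of_exact (Submodule.subtype_injective _)
    (LinearMap.exact_subtype_ker_map f) hf n

lemma hasProjectiveDimensionLE_of_quotSMulTop [IsLocalRing A] [IsNoetherianRing A] {x : A}
    (hx : x ∈ maximalIdeal A) (hxA : x ∈ A⁰) [Module.Finite A M] (hM : IsSMulRegular M x) {n : ℕ}
    (h : HasProjectiveDimensionLE (ModuleCat.of (A ⧸ Ideal.span {x}) (QuotSMulTop x M)) n) :
    HasProjectiveDimensionLE (ModuleCat.of A M) n := by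
  induction n generalizing M with
  | zero =>
    rw [hasProjectiveDimensionLE_zero_iff_projective] at h ⊢
    have := isLocalRing_quotient_span_singleton hx
    have : Module.Finite (A ⧸ Ideal.span {x}) (QuotSMulTop x M) :=
      .of_restrictScalars_finite A _ _
    have : Module.FinitePresentation A M := Module.finitePresentation_of_finite A M
    have : Module.Free A M :=
      (Module.free_quotSMulTop_iff_free A M (maximalIdeal_le_jacobson _ hx) hM).1
        Module.free_of_flat_of_isLocalRing
    infer_instance
  | succ n ih =>
    obtain ⟨F, _, _, _, _, f, hf⟩ := Module.exists_finite_presentation A M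
    have hker : IsSMulRegular (LinearMap.ker f) x :=
      (Module.Flat.isSMulRegular_of_nonZeroDivisors hxA).of_injective _
        (Submodule.subtype_injective (LinearMap.ker f))
    have hmk : Surjective (algebraMap A (A ⧸ Ideal.span {x})) := Ideal.Quotient.mk_surjective
    have hexact := LinearMap.exact_subtype_ker_map f
    rw [hasProjectiveDimensionLE_succ_iff_ker hf]
    refine ih hker ((hasProjectiveDimensionLE_succ_iff_of_exact
      (i := (QuotSMulTop.map x (LinearMap.ker f).subtype).extendScalarsOfSurjective hmk)
      (f := (QuotSMulTop.map x f).extendScalarsOfSurjective hmk) ?_ ?_ ?_ n).1 h)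
    · exact injective_quotSMulTop_map_of_isSMulRegular (Submodule.subtype_injective _) hexact hM
    · exact QuotSMulTop.map_exact x hexact hf
    · exact QuotSMulTop.map_surjective x hf

theorem hasProjectiveDimensionLE_spanFinrank_maximalIdeal (A : Type u) [CommRing A]
    [IsRegularLocalRing A] (M : Type u) [AddCommGroup M] [Module A M] [Module.Finite A M] :
    HasProjectiveDimensionLE (ModuleCat.of A M) (maximalIdeal A).spanFinrank := by
  induction hn : (maximalIdeal A).spanFinrank generalizing A M with
  | zero =>
    let := (isField_of_spanFinrank_maximalIdeal_eq_zero hn).toField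
    exact hasProjectiveDimensionLE_zero_iff_projective.2 inferInstance
  | succ n ih =>
    have := isDomain_of_isRegularLocalRing A
    obtain ⟨x, hx, hmin, _, hrank⟩ :=
      exists_isRegularLocalRing_quotient_span_singleton A (by simp [hn])
    have hx0 : x ≠ 0 := hmin ⊥ (by simp [IsDomain.minimalPrimes_eq_singleton_bot])
    obtain ⟨F, _, _, _, _, f, hf⟩ := Module.exists_finite_presentation A M
    have : Module.Finite (A ⧸ Ideal.span {x}) (QuotSMulTop x (LinearMap.ker f)) :=
      .of_restrictScalars_finite A _ _
    rw [hasProjectiveDimensionLE_succ_iff_ker hf]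
    exact hasProjectiveDimensionLE_of_quotSMulTop hx (mem_nonZeroDivisors_of_ne_zero hx0)
      (IsSMulRegular.of_ne_zero hx0) (ih _ _ (by omega))

end ProjectiveDimension

section Annihilation

section Abelian

open Abelian

variable {R : Type*} [CommRing R] {C : Type*} [Category* C] [Abelian C] [Linear R C] [HasExt C]

/-- The scalar `r` annihilates `Ext^i(X, Y)` for every `i ≥ n` and every object `Y`. Mathlib's `Ext`
is used here rather than `ExtM` because it comes with composition products and long exact
sequences. -/
def AnnihilatesExt (r : R) (n : ℕ) (X : C) : Prop :=
  ∀ i, n ≤ i → ∀ (Y : C) (e : Ext X Y i), r • e = 0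

lemma annihilatesExt_one_of_comp_eq_smul_id {r : R} {X P : C} [Projective P] {g : X ⟶ P}
    {h : P ⟶ X} (hgh : g ≫ h = r • 𝟙 X) : AnnihilatesExt r 1 X := by
  intro i hi Y e
  obtain ⟨i, rfl⟩ := Nat.exists_eq_add_of_le' hi
  calc r • e = (Ext.mk₀ (r • 𝟙 X)).comp e (zero_add _) := by
        rw [Ext.mk₀_smul, Ext.smul_comp, Ext.mk₀_id_comp]
    _ = (Ext.mk₀ g).comp ((Ext.mk₀ h).comp e (zero_add _)) (zero_add _) := by
        rw [← hgh, ← Ext.mk₀_comp_mk₀_assoc]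
    _ = 0 := by rw [Ext.eq_zero_of_projective ((Ext.mk₀ h).comp e _), Ext.comp_zero]

lemma AnnihilatesExt.X₃_of_shortExact {r : R} {n : ℕ} {S : ShortComplex C} (hS : S.ShortExact)
    [Projective S.X₂] (h : AnnihilatesExt r n S.X₁) : AnnihilatesExt r (n + 1) S.X₃ := by
  intro i hi Y e
  obtain ⟨i, rfl⟩ := Nat.exists_eq_add_of_le' (Nat.le_of_add_left_le hi)
  obtain ⟨e', rfl⟩ :=
    Ext.contravariant_sequence_exact₃ hS Y e (Ext.eq_zero_of_projective _) (add_comm 1 i)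
  rw [← Ext.comp_smul, h i (by omega), Ext.comp_zero]

lemma exists_d_comp_eq_smul {X Y : C} (P : ProjectiveResolution X) {r : R} {i : ℕ}
    (f : P.complex.X (i + 1) ⟶ Y) (hf : P.complex.d (i + 2) (i + 1) ≫ f = 0)
    (h : ∀ e : Ext X Y (i + 1), r • e = 0) : ∃ g, P.complex.d (i + 1) i ≫ g = r • f := by
  have hr := h (P.extMk f (i + 2) rfl hf)
  rw [Ext.smul_eq_comp_mk₀, P.extMk_comp_mk₀, P.extMk_eq_zero_iff _ _ _ _ i rfl] at hr
  simpa only [Linear.comp_smul, Category.comp_id] using hr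

end Abelian

lemma smul_homology_eq_zero {R : Type*} [CommRing R] (S : ShortComplex (ModuleCat R)) (r : R)
    (h : ∀ z : S.X₂, S.g z = 0 → ∃ y, S.f y = r • z) (w : S.homology) : r • w = 0 := by
  obtain ⟨c, rfl⟩ := (ModuleCat.epi_iff_surjective S.homologyπ).1 inferInstance w
  obtain ⟨y, hy⟩ := h (S.iCycles c) (ConcreteCategory.congr_hom S.iCycles_g c)
  have hc : r • c = S.toCycles y := by
    apply (ModuleCat.mono_iff_injective S.iCycles).1 inferInstance
    rw [map_smul, ← hy]
    exact (ConcreteCategory.congr_hom S.toCycles_i y).symm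
  rw [← map_smul, hc]
  exact ConcreteCategory.congr_hom S.toCycles_comp_homologyπ y

lemma smul_extM_eq_zero {R : Type u} [CommRing R] {M N : ModuleCat.{u} R} {r : R} {i : ℕ}
    (h : ∀ e : Abelian.Ext M N (i + 1), r • e = 0) (w : ExtM R (i + 1) M N) : r • w = 0 := by
  let P := projectiveResolution M
  let e := (P.isoExt (R := R) (i + 1) N).toLinearEquiv
  suffices r • e w = 0 by rwa [← map_smul, LinearEquiv.map_eq_zero_iff] at this
  let K := P.complex.linearYonedaObj R N
  let e' := (K.homologyIsoSc' i (i + 1) (i + 2) (by simp) (by simp)).toLinearEquiv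
  suffices r • e' (e w) = 0 by rwa [← map_smul, LinearEquiv.map_eq_zero_iff] at this
  exact smul_homology_eq_zero _ r (fun f hf ↦ exists_d_comp_eq_smul P f hf h) _

lemma AnnihilatesExt.mem_caN {R : Type u} [CommRing R] {M : ModuleCat.{u} R} {r : R} {n : ℕ}
    (h : AnnihilatesExt r (n + 1) M) : r ∈ caN R (n + 1) M := by
  intro i hi N _ w
  obtain ⟨i, rfl⟩ := Nat.exists_eq_add_of_le' (Nat.le_of_add_left_le hi)
  exact smul_extM_eq_zero (h _ hi N) w

end Annihilation

section Localization

open Function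

variable {R : Type u} [CommRing R] (S : Submonoid R)

lemma exists_comp_eq_smul_id_of_projective_localizedModule {M F : Type*} [AddCommGroup M]
    [Module R M] [Module.FinitePresentation R M] [AddCommGroup F] [Module R F] {f : F →ₗ[R] M}
    (hf : Surjective f) [Module.Projective (Localization S) (LocalizedModule S M)] :
    ∃ s ∈ S, ∃ g : M →ₗ[R] F, f ∘ₗ g = s • LinearMap.id := by
  let ιM := LocalizedModule.mkLinearMap S M
  let ιF := LocalizedModule.mkLinearMap S F
  obtain ⟨σ, hσ⟩ := Module.projective_lifting_property (LocalizedModule.map S f) LinearMap.id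
    (LocalizedModule.map_surjective S f hf)
  obtain ⟨g, s, hg⟩ := Module.FinitePresentation.exists_lift_of_isLocalizedModule S ιF
    (σ.restrictScalars R ∘ₗ ιM)
  have hfg : ιM ∘ₗ f ∘ₗ g = ιM ∘ₗ (s • LinearMap.id) := by
    ext m
    calc ιM (f (g m)) = LocalizedModule.map S f (ιF (g m)) := by simp [ιM, ιF]
      _ = LocalizedModule.map S f (s • σ (ιM m)) := congrArg _ (LinearMap.congr_fun hg m)
      _ = s • LocalizedModule.map S f (σ (ιM m)) :=
        ((LocalizedModule.map S f).restrictScalars R).map_smul_of_tower s _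
      _ = s • ιM m := congrArg _ (LinearMap.congr_fun hσ (ιM m))
      _ = ιM (s • m) := (ιM.map_smul_of_tower s m).symm
  obtain ⟨t, ht⟩ := Module.Finite.exists_smul_of_comp_eq_of_isLocalizedModule S ιM _ _ hfg
  refine ⟨t * s, S.mul_mem t.2 s.2, t • g, ?_⟩
  rw [LinearMap.comp_smul, mul_smul]
  exact ht

lemma exists_annihilatesExt_of_hasProjectiveDimensionLE_localizedModule [IsNoetherianRing R]
    (M : Type u) [AddCommGroup M] [Module R M] [Module.Finite R M] {n : ℕ}
    (h : HasProjectiveDimensionLE (ModuleCat.of (Localization S) (LocalizedModule S M)) n) :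
    ∃ s ∈ S, AnnihilatesExt s (n + 1) (ModuleCat.of R M) := by
  induction n generalizing M with
  | zero =>
    obtain ⟨F, _, _, _, _, f, hf⟩ := Module.exists_finite_presentation R M
    have : Module.FinitePresentation R M := Module.finitePresentation_of_finite R M
    have := hasProjectiveDimensionLE_zero_iff_projective.1 h
    obtain ⟨s, hs, g, hfg⟩ := exists_comp_eq_smul_id_of_projective_localizedModule S hf
    have : Projective (ModuleCat.of R F) := (IsProjective.iff_projective F).1 inferInstance
    exact ⟨s, hs, annihilatesExt_one_of_comp_eq_smul_id (g := ModuleCat.ofHom g)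
      (h := ModuleCat.ofHom f) (ModuleCat.hom_ext hfg)⟩
  | succ n ih =>
    obtain ⟨F, _, _, _, _, f, hf⟩ := Module.exists_finite_presentation R M
    have : Module.Projective (Localization S) (LocalizedModule S F) :=
      Module.projective_of_isLocalizedModule S (LocalizedModule.mkLinearMap S F)
    have : Projective f.shortComplexKer.X₂ := (IsProjective.iff_projective F).1 inferInstance
    have hker := (hasProjectiveDimensionLE_succ_iff_of_exact
      (i := LocalizedModule.map S (LinearMap.ker f).subtype) (f := LocalizedModule.map S f)
      (LocalizedModule.map_injective S _ (Submodule.subtype_injective (LinearMap.ker f)))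
      (LocalizedModule.map_exact S _ f (LinearMap.exact_subtype_ker_map f))
      (LocalizedModule.map_surjective S f hf) n).1 h
    obtain ⟨s, hs, hann⟩ := ih _ hker
    exact ⟨s, hs, hann.X₃_of_shortExact (LinearMap.shortExact_shortComplexKer hf)⟩

end Localization

/-- `V(ca_R(M)) ⊆ Sing(R)`. -/
theorem stmt9 (R : Type u) [CommRing R] [IsNoetherianRing R]
    (M : ModuleCat.{u} R) [Module.Finite R M] (p : PrimeSpectrum R)
    (hp : ca R M ⊆ (p.asIdeal : Set R)) :
    ¬ IsRegularLocal (Localization.AtPrime p.asIdeal) := by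
  intro hreg
  have := hreg.isRegularLocalRing
  have : Module.Finite (Localization.AtPrime p.asIdeal) (LocalizedModule p.asIdeal.primeCompl M) :=
    .of_isLocalizedModule p.asIdeal.primeCompl (LocalizedModule.mkLinearMap _ M)
  obtain ⟨s, hs, hann⟩ := exists_annihilatesExt_of_hasProjectiveDimensionLE_localizedModule
    p.asIdeal.primeCompl M (hasProjectiveDimensionLE_spanFinrank_maximalIdeal _ _)
  exact hs (hp (Set.mem_iUnion.2 ⟨_, hann.mem_caN⟩))
end
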